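/- arXiv:2105.09500 — 2 statements merged into one kernel-verified Lean document; each statement's English description precedes it below -/
import Mathlib

section
/- Let G be a simple graph on n ≥ 4 vertices. Suppose that for every 4-element vertex subset S such that the subgraph of G induced on S is isomorphic to K_{1,2} ∪ K_1, to a graph obtained from K_{1,2} ∪ K_1 by adding one edge (i.e., to one of K_3 ∪ K_1, K_{1,3}, P_4), or to K_{1,3}+e, and for every pair of vertices x, y ∈ S that are nonadjacent in G, one has d(x) + d(y) ≥ n (degrees taken in G). If G has a vertex v with d(v) ≥ 2, then G is Hamiltonian. -/
open SimpleGraph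

/-- `K_{1,2} ∪ K_1`: a path on the vertices 0,1,2 together with the isolated vertex 3. -/
def pathUnionK1 : SimpleGraph (Fin 4) := SimpleGraph.fromEdgeSet {s(0, 1), s(1, 2)}

/-- `K_3 ∪ K_1`: a triangle on the vertices 0,1,2 together with the isolated vertex 3. -/
def triangleUnionK1 : SimpleGraph (Fin 4) :=
  SimpleGraph.fromEdgeSet {s(0, 1), s(1, 2), s(0, 2)}

/-- `K_{1,3}`: the star with center 0 and leaves 1,2,3. -/
def star13 : SimpleGraph (Fin 4) := SimpleGraph.fromEdgeSet {s(0, 1), s(0, 2), s(0, 3)}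

/-- `K_{1,3} + e` (the paw): the star `K_{1,3}` with an added edge between leaves 1 and 2. -/
def star13PlusE : SimpleGraph (Fin 4) :=
  SimpleGraph.fromEdgeSet {s(0, 1), s(0, 2), s(0, 3), s(1, 2)}

/-- `P_4`: the path 0-1-2-3. -/
def path4 : SimpleGraph (Fin 4) := SimpleGraph.fromEdgeSet {s(0, 1), s(1, 2), s(2, 3)}

/-!
The hypothesis forces Ore's condition on *all* nonadjacent pairs, and Ore's theorem applies.

The five four-vertex graphs of the hypothesis are those spanned by a path `a - b - c` and a fourth
vertex with at most one neighbour on it. Suppose that `x`, `y` violate Ore's condition. Such a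
quadruple never contains both of them. A common neighbour of `x` and `y` would therefore make every
other vertex adjacent to both, so that their degrees would add up to at least `2 (n - 2) ≥ n`.
Without common neighbours, neither `x` nor `y` lies on a path with two edges, so both have degree at
most one and neither is adjacent to `v`. Then `x` and a path centred at `v` form such a quadruple,
whence `n ≤ d(v) + d(x) ≤ (n - 3) + 1`, which is absurd.

For Ore's theorem, arrange the vertices on a circle with as few nonadjacent neighbours as possible.
If the last and the first vertex are nonadjacent, reversing a suitable final segment removes this
gap and creates no new one.
-/

section CircularOrderings

variable {V : Type*} (G : SimpleGraph V) [DecidableRel G.Adj]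

/-- The number of pairs of consecutive entries of a list of vertices that are not adjacent in the
graph; it measures how far the list is from being the support of a walk. -/
def gaps : List V → ℕ
  | [] => 0
  | [_] => 0
  | a :: b :: l => (if G.Adj a b then 0 else 1) + gaps (b :: l)

/-- The number of gaps of a list of vertices placed on a circle. The circle is closed by repeating
the first entry at the end, so the empty list needs no special treatment. -/
def cyclicGaps (l : List V) : ℕ := gaps G (l ++ l.take 1)

variable {G}

lemma gaps_append {A B : List V} (hA : A ≠ []) (hB : B ≠ []) :
    gaps G (A ++ B) = gaps G A + gaps G [A.getLast hA, B.head hB] + gaps G B := by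
  induction A with
  | nil => contradiction
  | cons a A ih =>
    cases A with
    | nil =>
      obtain ⟨b, B, rfl⟩ := List.exists_cons_of_ne_nil hB
      change (if G.Adj a b then 0 else 1) + gaps G (b :: B) =
        0 + ((if G.Adj a b then 0 else 1) + 0) + gaps G (b :: B)
      lia
    | cons a' A =>
      have := ih (List.cons_ne_nil a' A)
      simp only [List.cons_append, gaps, List.getLast_cons_cons] at this ⊢
      lia

lemma gaps_pair_comm (a b : V) : gaps G [a, b] = gaps G [b, a] := by
  simp only [gaps, G.adj_comm]

lemma gaps_reverse (l : List V) : gaps G l.reverse = gaps G l := by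
  induction l with
  | nil => rfl
  | cons a l ih =>
    cases l with
    | nil => rfl
    | cons b l =>
      rw [List.reverse_cons, gaps_append (by simp) (by simp), ih, List.getLast_reverse,
        gaps_pair_comm]
      simp only [gaps, List.head_cons]
      lia

lemma cyclicGaps_append {A B : List V} (hA : A ≠ []) (hB : B ≠ []) :
    cyclicGaps G (A ++ B) = gaps G A + gaps G [A.getLast hA, B.head hB] + gaps G B +
      gaps G [B.getLast hB, A.head hA] := by
  have htake : (A ++ B).take 1 = [A.head hA] := by
    obtain ⟨a, A, rfl⟩ := List.exists_cons_of_ne_nil hA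
    rfl
  rw [cyclicGaps, htake, List.append_assoc, gaps_append hA (by simp), gaps_append hB (by simp)]
  simp only [List.head_append_of_ne_nil hB, List.head_cons, gaps]
  lia

lemma cyclicGaps_append_comm (A B : List V) : cyclicGaps G (A ++ B) = cyclicGaps G (B ++ A) := by
  rcases eq_or_ne A [] with rfl | hA
  · simp
  rcases eq_or_ne B [] with rfl | hB
  · simp
  rw [cyclicGaps_append hA hB, cyclicGaps_append hB hA]
  lia

lemma cyclicGaps_append_reverse_lt {A B : List V} (hA : A ≠ []) (hB : B ≠ [])
    (hlast : G.Adj (A.getLast hA) (B.getLast hB)) (hhead : G.Adj (A.head hA) (B.head hB))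
    (hgap : ¬ G.Adj (B.getLast hB) (A.head hA)) :
    cyclicGaps G (A ++ B.reverse) < cyclicGaps G (A ++ B) := by
  rw [cyclicGaps_append hA hB, cyclicGaps_append hA (by simpa using hB), gaps_reverse]
  simp [gaps, hlast, hhead.symm, hgap]

end CircularOrderings

section Ore

open scoped List

variable {V : Type*} [Fintype V] {G : SimpleGraph V}

lemma isHamiltonian_of_isChain [DecidableEq V] {l : List V} (hcard : 3 ≤ Fintype.card V)
    (hl : l ~ Finset.univ.toList) (hne : l ≠ []) (hchain : l.IsChain G.Adj)
    (hclose : G.Adj (l.getLast hne) (l.head hne)) : G.IsHamiltonian := by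
  intro _
  have hlen : l.length = Fintype.card V := by simpa using hl.length_eq
  have hpath : (Walk.ofSupport l hne hchain).IsPath := by
    rw [Walk.isPath_def, Walk.support_ofSupport]
    exact hl.nodup_iff.2 (Finset.nodup_toList _)
  refine ⟨_, .cons hclose (Walk.ofSupport l hne hchain), ?_⟩
  rw [Walk.isHamiltonianCycle_iff_isCycle_and_length_eq,
    Walk.isCycle_iff_isPath_tail_and_le_length, Walk.length_cons, Walk.length_ofSupport]
  exact ⟨⟨by simpa using hpath, by lia⟩, by lia⟩

variable [DecidableRel G.Adj]

lemma exists_adj_adj_apply (σ : Equiv.Perm V) {x : V}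
    (hdeg : Fintype.card V ≤ G.degree x + G.degree (σ x)) :
    ∃ w, G.Adj x w ∧ G.Adj (σ x) (σ w) := by
  classical
  have himage : (G.neighborFinset x).map σ.toEmbedding ⊆ Finset.univ.erase (σ x) := by
    intro z
    simp only [Finset.mem_map_equiv, mem_neighborFinset, Finset.mem_erase, Finset.mem_univ,
      and_true]
    rintro hz rfl
    simp at hz
  have hnbr : G.neighborFinset (σ x) ⊆ Finset.univ.erase (σ x) := fun z hz ↦ by
    simpa using ((G.mem_neighborFinset _ _).1 hz).ne'
  have hcard : (Finset.univ.erase (σ x)).card <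
      ((G.neighborFinset x).map σ.toEmbedding).card + (G.neighborFinset (σ x)).card := by
    have : 0 < Fintype.card V := Fintype.card_pos_iff.2 ⟨x⟩
    rw [Finset.card_map, card_neighborFinset_eq_degree, card_neighborFinset_eq_degree,
      Finset.card_erase_of_mem (Finset.mem_univ _), Finset.card_univ]
    lia
  obtain ⟨z, hz⟩ := Finset.inter_nonempty_of_card_lt_card_add_card himage hnbr hcard
  simp only [Finset.mem_inter, Finset.mem_map_equiv, mem_neighborFinset] at hz
  exact ⟨σ.symm z, hz.1, by simpa using hz.2⟩

lemma exists_append_adj_getLast_adj_head {l : List V} (hl : l ~ Finset.univ.toList) (hne : l ≠ [])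
    (hdeg : Fintype.card V ≤ G.degree (l.getLast hne) + G.degree (l.head hne)) :
    ∃ (A B : List V) (hA : A ≠ []) (hB : B ≠ []), l = A ++ B ∧
      G.Adj (A.getLast hA) (B.getLast hB) ∧ G.Adj (A.head hA) (B.head hB) := by
  classical
  have hnodup : l.Nodup := hl.nodup_iff.2 (Finset.nodup_toList _)
  have hlast : l.formPerm (l.getLast hne) = l.head hne := by
    obtain ⟨a, t, rfl⟩ := List.exists_cons_of_ne_nil hne
    exact List.formPerm_apply_getLast a t
  rw [← hlast] at hdeg
  obtain ⟨w, hw, hw'⟩ := exists_adj_adj_apply l.formPerm hdeg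
  rw [hlast] at hw'
  obtain ⟨A, B, rfl⟩ := List.append_of_mem (hl.mem_iff.2 (by simp) : w ∈ l)
  rcases B with _ | ⟨b, B⟩
  · simp at hw
  have hb : (A ++ w :: b :: B).formPerm w = b := by
    simpa using List.formPerm_apply_lt_getElem _ hnodup A.length (by simp)
  rw [hb] at hw'
  exact ⟨A ++ [w], b :: B, by simp, by simp, by simp, by simpa using hw.symm, by
    simpa [List.head_append] using hw'⟩

lemma exists_perm_cyclicGaps_lt
    (hore : ∀ x y, x ≠ y → ¬ G.Adj x y → Fintype.card V ≤ G.degree x + G.degree y)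
    (hcard : 2 ≤ Fintype.card V) {l : List V} (hl : l ~ Finset.univ.toList) (hne : l ≠ [])
    (hgap : ¬ G.Adj (l.getLast hne) (l.head hne)) :
    ∃ l', l' ~ Finset.univ.toList ∧ cyclicGaps G l' < cyclicGaps G l := by
  have hends : l.getLast hne ≠ l.head hne := by
    have hnodup : l.Nodup := hl.nodup_iff.2 (Finset.nodup_toList _)
    have hlen : l.length = Fintype.card V := by simpa using hl.length_eq
    rw [List.getLast_eq_getElem, List.head_eq_getElem, Ne, hnodup.getElem_inj_iff]
    lia
  obtain ⟨A, B, hA, hB, rfl, hlast, hhead⟩ :=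
    exists_append_adj_getLast_adj_head hl hne (hore _ _ hends hgap)
  rw [List.getLast_append_of_ne_nil _ hB, List.head_append_of_ne_nil hA] at hgap
  exact ⟨A ++ B.reverse, ((List.reverse_perm B).append_left A).trans hl,
    cyclicGaps_append_reverse_lt hA hB hlast hhead hgap⟩

theorem isHamiltonian_of_ore [DecidableEq V]
    (hore : ∀ x y, x ≠ y → ¬ G.Adj x y → Fintype.card V ≤ G.degree x + G.degree y)
    (hcard : 3 ≤ Fintype.card V) : G.IsHamiltonian := by
  obtain ⟨l, hl, hmin⟩ := exists_minimalFor_of_wellFoundedLT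
    (fun l : List V ↦ l ~ Finset.univ.toList) (cyclicGaps G) ⟨_, .refl _⟩
  have hadj {l' : List V} (hl' : l' ~ Finset.univ.toList)
      (hgaps : cyclicGaps G l' = cyclicGaps G l) (hne : l' ≠ []) :
      G.Adj (l'.getLast hne) (l'.head hne) := by
    by_contra hgap
    obtain ⟨l'', hl'', hlt⟩ := exists_perm_cyclicGaps_lt hore (by lia) hl' hne hgap
    have := hmin hl''
    lia
  have hne : l ≠ [] := by
    rintro rfl
    have := hl.length_eq
    simp only [List.length_nil, Finset.length_toList, Finset.card_univ] at this
    lia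
  refine isHamiltonian_of_isChain hcard hl hne ?_ (hadj hl rfl hne)
  -- A gap inside `l` becomes the gap between the two ends after rotating `l`.
  rw [List.isChain_iff_forall_rel_of_append_cons_cons]
  rintro a b A B rfl
  have hrot : A ++ a :: b :: B = (A ++ [a]) ++ (b :: B) := by simp
  have := hadj (List.perm_append_comm.trans (hrot ▸ hl))
    (by rw [hrot, cyclicGaps_append_comm]) (List.append_ne_nil_of_left_ne_nil (by simp) _)
  simpa using this

end Ore

section LooseCherries

variable {V : Type*} {G : SimpleGraph V} {a b c d : V}

/-- A *loose cherry*: the path `a - b - c`, possibly with its ends adjacent, and a further vertex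
`d` with at most one neighbour on it. Quadruples of this kind are those spanning one of the five
graphs `K_{1,2} ∪ K_1`, `K_3 ∪ K_1`, `K_{1,3}`, `P_4` and `K_{1,3} + e`. -/
structure IsLooseCherry (G : SimpleGraph V) (a b c d : V) : Prop where
  adj_left : G.Adj a b
  adj_right : G.Adj b c
  ends_ne : a ≠ c
  ne_left : d ≠ a
  ne_center : d ≠ b
  ne_right : d ≠ c
  not_adj_left_center : ¬ (G.Adj d a ∧ G.Adj d b)
  not_adj_left_right : ¬ (G.Adj d a ∧ G.Adj d c)
  not_adj_center_right : ¬ (G.Adj d b ∧ G.Adj d c)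

lemma nonempty_induce_iso_of_adj_iff {H : SimpleGraph (Fin 4)} {s : Set V}
    (hs : {a, b, c, d} = s) (hnodup : [a, b, c, d].Nodup)
    (hadj : ∀ i j, i < j → (G.Adj (![a, b, c, d] i) (![a, b, c, d] j) ↔ H.Adj i j)) :
    Nonempty (G.induce s ≃g H) := by
  have hinj : Function.Injective ![a, b, c, d] := by
    simpa [← List.nodup_ofFn, List.ofFn_succ] using hnodup
  have hrange : Set.range ![a, b, c, d] = s := by
    rw [← hs]
    ext
    simp only [Set.mem_range, Fin.exists_fin_succ, Set.mem_insert_iff]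
    simp [eq_comm]
  have hadj' (i j) : G.Adj (![a, b, c, d] i) (![a, b, c, d] j) ↔ H.Adj i j := by
    rcases lt_trichotomy i j with hij | rfl | hji
    · exact hadj i j hij
    · simp only [SimpleGraph.irrefl]
    · rw [G.adj_comm, H.adj_comm, hadj j i hji]
  let f : H ↪g G := ⟨⟨_, hinj⟩, hadj' _ _⟩
  rw [← hrange]
  exact ⟨f.isoInduceRange.symm⟩

namespace IsLooseCherry

lemma card_eq_four [DecidableEq V] (h : IsLooseCherry G a b c d) :
    ({a, b, c, d} : Finset V).card = 4 := by
  grind [IsLooseCherry, Adj.ne]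

lemma nonempty_induce_iso_of_not_adj (h : IsLooseCherry G a b c d) (hac : ¬ G.Adj a c) :
    Nonempty (G.induce {a, b, c, d} ≃g pathUnionK1) ∨
      Nonempty (G.induce {a, b, c, d} ≃g star13) ∨
      Nonempty (G.induce {a, b, c, d} ≃g path4) := by
  have hnodup : [a, b, c, d].Nodup := by grind [IsLooseCherry, Adj.ne]
  obtain ⟨hab, hbc, -, -, -, -, hda_db, hda_dc, hdb_dc⟩ := h
  by_cases hda : G.Adj d a
  · refine .inr (.inr (nonempty_induce_iso_of_adj_iff (a := d) (b := a) (c := b) (d := c)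
      (by grind) (by grind) ?_))
    simp_all [Fin.forall_fin_succ, path4, G.adj_comm]
  by_cases hdb : G.Adj d b
  · refine .inr (.inl (nonempty_induce_iso_of_adj_iff (a := b) (b := a) (c := c) (d := d)
      (by grind) (by grind) ?_))
    simp_all [Fin.forall_fin_succ, star13, G.adj_comm]
  by_cases hdc : G.Adj d c
  · refine .inr (.inr (nonempty_induce_iso_of_adj_iff (a := a) (b := b) (c := c) (d := d)
      rfl hnodup ?_))
    simp_all [Fin.forall_fin_succ, path4, G.adj_comm]
  · refine .inl (nonempty_induce_iso_of_adj_iff rfl hnodup ?_)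
    simp_all [Fin.forall_fin_succ, pathUnionK1, G.adj_comm]

lemma nonempty_induce_iso_of_adj (h : IsLooseCherry G a b c d) (hac : G.Adj a c) :
    Nonempty (G.induce {a, b, c, d} ≃g triangleUnionK1) ∨
      Nonempty (G.induce {a, b, c, d} ≃g star13PlusE) := by
  have hnodup : [a, b, c, d].Nodup := by grind [IsLooseCherry, Adj.ne]
  obtain ⟨hab, hbc, -, -, -, -, hda_db, hda_dc, hdb_dc⟩ := h
  by_cases hda : G.Adj d a
  · refine .inr (nonempty_induce_iso_of_adj_iff (a := a) (b := b) (c := c) (d := d) rfl hnodup ?_)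
    simp_all [Fin.forall_fin_succ, star13PlusE, G.adj_comm]
  by_cases hdb : G.Adj d b
  · refine .inr (nonempty_induce_iso_of_adj_iff (a := b) (b := a) (c := c) (d := d)
      (by grind) (by grind) ?_)
    simp_all [Fin.forall_fin_succ, star13PlusE, G.adj_comm]
  by_cases hdc : G.Adj d c
  · refine .inr (nonempty_induce_iso_of_adj_iff (a := c) (b := a) (c := b) (d := d)
      (by grind) (by grind) ?_)
    simp_all [Fin.forall_fin_succ, star13PlusE, G.adj_comm]
  · refine .inl (nonempty_induce_iso_of_adj_iff rfl hnodup ?_)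
    simp_all [Fin.forall_fin_succ, triangleUnionK1, G.adj_comm]

lemma nonempty_induce_iso (h : IsLooseCherry G a b c d) :
    Nonempty (G.induce {a, b, c, d} ≃g pathUnionK1) ∨
      (Nonempty (G.induce {a, b, c, d} ≃g triangleUnionK1) ∨
        Nonempty (G.induce {a, b, c, d} ≃g star13) ∨
        Nonempty (G.induce {a, b, c, d} ≃g path4)) ∨
      Nonempty (G.induce {a, b, c, d} ≃g star13PlusE) := by
  by_cases hac : G.Adj a c
  · rcases h.nonempty_induce_iso_of_adj hac with h | h <;> simp only [h, true_or, or_true]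
  · rcases h.nonempty_induce_iso_of_not_adj hac with h | h | h <;>
      simp only [h, true_or, or_true]

end IsLooseCherry

end LooseCherries

section LightPairs

variable {V : Type*} [Fintype V] {G : SimpleGraph V} [DecidableRel G.Adj] {a b x y v : V}

/-- A pair of vertices that violates Ore's condition. -/
structure IsLightPair (G : SimpleGraph V) [DecidableRel G.Adj] (x y : V) : Prop where
  ne : x ≠ y
  not_adj : ¬ G.Adj x y
  degree_add_degree_lt : G.degree x + G.degree y < Fintype.card V

lemma IsLightPair.symm (h : IsLightPair G x y) : IsLightPair G y x :=
  ⟨h.ne.symm, fun hyx ↦ h.not_adj hyx.symm, by have := h.degree_add_degree_lt; lia⟩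

/-- Ore's condition restricted to the pairs of vertices that lie in a common loose cherry; this is
the form in which the argument uses the hypothesis on four-vertex induced subgraphs. -/
def OreOnLooseCherries (G : SimpleGraph V) [DecidableRel G.Adj] : Prop :=
  ∀ ⦃a b c d⦄, IsLooseCherry G a b c d →
    ∀ x ∈ ({a, b, c, d} : Set V), ∀ y ∈ ({a, b, c, d} : Set V), ¬ IsLightPair G x y

namespace OreOnLooseCherries

lemma adj_of_adj_of_adj (hG : OreOnLooseCherries G) (h : IsLightPair G x y) (hxa : G.Adj x a)
    (hya : G.Adj y a) (hbx : b ≠ x) (hby : b ≠ y) : G.Adj x b := by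
  by_contra hxb
  have hba : b ≠ a := by rintro rfl; exact hxb hxa
  by_cases hab : G.Adj a b ∧ G.Adj y b
  · have hcherry : IsLooseCherry G a y b x :=
      ⟨hya.symm, hab.2, hba.symm, hxa.ne, h.ne, hbx.symm, fun hx ↦ h.not_adj hx.2,
        fun hx ↦ hxb hx.2, fun hx ↦ hxb hx.2⟩
    exact hG hcherry x (by simp) y (by simp) h
  · have hcherry : IsLooseCherry G x a y b :=
      ⟨hxa, hya.symm, h.ne, hbx, hba, hby, fun hb ↦ hxb hb.1.symm, fun hb ↦ hxb hb.1.symm,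
        fun hb ↦ hab ⟨hb.1.symm, hb.2.symm⟩⟩
    exact hG hcherry x (by simp) y (by simp) h

lemma card_le_degree_add_two (hG : OreOnLooseCherries G) (h : IsLightPair G x y)
    (hxa : G.Adj x a) (hya : G.Adj y a) : Fintype.card V ≤ G.degree x + 2 := by
  classical
  have hsubset : ({x, y} : Finset V)ᶜ ⊆ G.neighborFinset x := fun b hb ↦ by
    simp only [Finset.mem_compl, Finset.mem_insert, Finset.mem_singleton, not_or] at hb
    exact (G.mem_neighborFinset x b).2 (hG.adj_of_adj_of_adj h hxa hya hb.1 hb.2)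
  have hle := Finset.card_le_card hsubset
  rw [Finset.card_compl, Finset.card_pair h.ne, card_neighborFinset_eq_degree] at hle
  lia

lemma not_adj_of_adj (hG : OreOnLooseCherries G) (hn : 4 ≤ Fintype.card V)
    (h : IsLightPair G x y) (hxa : G.Adj x a) : ¬ G.Adj y a := fun hya ↦ by
  have hx := hG.card_le_degree_add_two h hxa hya
  have hy := hG.card_le_degree_add_two h.symm hya hxa
  have hlt := h.degree_add_degree_lt
  lia

lemma eq_of_adj_of_adj (hG : OreOnLooseCherries G) (hn : 4 ≤ Fintype.card V)
    (h : IsLightPair G x y) (hxa : G.Adj x a) (hab : G.Adj a b) : x = b := by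
  by_contra hxb
  have hya : ¬ G.Adj y a := hG.not_adj_of_adj hn h hxa
  have hyx : ¬ G.Adj y x := h.symm.not_adj
  have hyb : y ≠ b := by rintro rfl; exact hya hab.symm
  have hya_ne : y ≠ a := by rintro rfl; exact h.not_adj hxa
  have hcherry : IsLooseCherry G x a b y :=
    ⟨hxa, hab, hxb, h.ne.symm, hya_ne, hyb, fun hy ↦ hyx hy.1, fun hy ↦ hyx hy.1,
      fun hy ↦ hya hy.1⟩
  exact hG hcherry x (by simp) y (by simp) h

lemma degree_le_one (hG : OreOnLooseCherries G) (hn : 4 ≤ Fintype.card V)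
    (h : IsLightPair G x y) : G.degree x ≤ 1 := by
  rw [← card_neighborFinset_eq_degree, Finset.card_le_one]
  simp only [mem_neighborFinset]
  intro a hxa b hxb
  by_contra hab
  have hya : ¬ G.Adj y a := hG.not_adj_of_adj hn h hxa
  have hyx : ¬ G.Adj y x := h.symm.not_adj
  have hya_ne : y ≠ a := by rintro rfl; exact h.not_adj hxa
  have hyb_ne : y ≠ b := by rintro rfl; exact h.not_adj hxb
  have hcherry : IsLooseCherry G a x b y :=
    ⟨hxa.symm, hxb, hab, hya_ne, h.ne.symm, hyb_ne, fun hy ↦ hya hy.1, fun hy ↦ hya hy.1,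
      fun hy ↦ hyx hy.1⟩
  exact hG hcherry x (by simp) y (by simp) h

lemma not_adj_of_two_le_degree (hG : OreOnLooseCherries G) (hn : 4 ≤ Fintype.card V)
    (h : IsLightPair G x y) (hv : 2 ≤ G.degree v) : ¬ G.Adj v x := fun hvx ↦ by
  have hle : G.degree v ≤ 1 := by
    rw [← card_neighborFinset_eq_degree, Finset.card_le_one]
    simp only [mem_neighborFinset]
    intro a hva b hvb
    rw [← hG.eq_of_adj_of_adj hn h hvx.symm hva, hG.eq_of_adj_of_adj hn h hvx.symm hvb]
  lia

lemma card_le_degree_add_degree_of_two_le_degree (hG : OreOnLooseCherries G)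
    (hn : 4 ≤ Fintype.card V) (h : IsLightPair G x y) (hv : 2 ≤ G.degree v) :
    Fintype.card V ≤ G.degree v + G.degree x := by
  have hvx : ¬ G.Adj v x := hG.not_adj_of_two_le_degree hn h hv
  have hvx_ne : x ≠ v := by
    rintro rfl
    have := hG.degree_le_one hn h
    lia
  obtain ⟨p, hp, q, hq, hpq⟩ :=
    Finset.one_lt_card.1 (hv.trans_eq (card_neighborFinset_eq_degree G v).symm)
  rw [mem_neighborFinset] at hp hq
  have hxp : ¬ G.Adj x p := fun hxp ↦ hvx_ne (hG.eq_of_adj_of_adj hn h hxp hp.symm)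
  have hxv : ¬ G.Adj x v := fun hxv ↦ hvx hxv.symm
  have hxp_ne : x ≠ p := by rintro rfl; exact hvx hp
  have hxq_ne : x ≠ q := by rintro rfl; exact hvx hq
  have hcherry : IsLooseCherry G p v q x :=
    ⟨hp.symm, hq, hpq, hxp_ne, hvx_ne, hxq_ne, fun hx ↦ hxp hx.1, fun hx ↦ hxp hx.1,
      fun hx ↦ hxv hx.1⟩
  by_contra! hlt
  exact hG hcherry v (by simp) x (by simp) ⟨hvx_ne.symm, hvx, hlt⟩

lemma degree_add_three_le_card (hG : OreOnLooseCherries G) (hn : 4 ≤ Fintype.card V)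
    (h : IsLightPair G x y) (hv : 2 ≤ G.degree v) : G.degree v + 3 ≤ Fintype.card V := by
  classical
  have hx := hG.degree_le_one hn h
  have hy := hG.degree_le_one hn h.symm
  have hvx : v ≠ x := by rintro rfl; lia
  have hvy : v ≠ y := by rintro rfl; lia
  have hsubset : G.neighborFinset v ⊆ ({v, x, y} : Finset V)ᶜ := fun b hb ↦ by
    rw [mem_neighborFinset] at hb
    simp only [Finset.mem_compl, Finset.mem_insert, Finset.mem_singleton]
    rintro (rfl | rfl | rfl)
    · exact G.irrefl hb
    · exact hG.not_adj_of_two_le_degree hn h hv hb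
    · exact hG.not_adj_of_two_le_degree hn h.symm hv hb
  have hle := Finset.card_le_card hsubset
  rw [Finset.card_compl, Finset.card_eq_three.2 ⟨v, x, y, hvx, hvy, h.ne, rfl⟩,
    card_neighborFinset_eq_degree] at hle
  lia

theorem not_isLightPair (hG : OreOnLooseCherries G) (hn : 4 ≤ Fintype.card V)
    (hv : 2 ≤ G.degree v) : ¬ IsLightPair G x y := fun h ↦ by
  have hlower := hG.card_le_degree_add_degree_of_two_le_degree hn h hv
  have hupper := hG.degree_add_three_le_card hn h hv
  have hx := hG.degree_le_one hn h
  lia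

end OreOnLooseCherries

end LightPairs

/-- **Corollary 1.** Let `G` be a graph on `n ≥ 4` vertices satisfying `d(x) + d(y) ≥ n`
for each pair of nonadjacent vertices `x, y` of every 4-element induced subgraph isomorphic
to `K_{1,2} ∪ K_1`, to a graph obtained from `K_{1,2} ∪ K_1` by adding one edge (i.e. to one
of `K_3 ∪ K_1`, `K_{1,3}`, `P_4`), or to `K_{1,3} + e`. If `G` has a vertex `v` with
`d(v) ≥ 2`, then `G` is Hamiltonian. -/
theorem stmt2 {V : Type*} [Fintype V] [DecidableEq V]
    (G : SimpleGraph V) [DecidableRel G.Adj]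
    (hn : 4 ≤ Fintype.card V)
    (hcond : ∀ S : Finset V, S.card = 4 →
      (Nonempty (G.induce (S : Set V) ≃g pathUnionK1) ∨
       (Nonempty (G.induce (S : Set V) ≃g triangleUnionK1) ∨
        Nonempty (G.induce (S : Set V) ≃g star13) ∨
        Nonempty (G.induce (S : Set V) ≃g path4)) ∨
       Nonempty (G.induce (S : Set V) ≃g star13PlusE)) →
      ∀ x ∈ S, ∀ y ∈ S, x ≠ y → ¬ G.Adj x y →
        Fintype.card V ≤ G.degree x + G.degree y)
    (v : V) (hv : 2 ≤ G.degree v) :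
    G.IsHamiltonian := by
  have hG : OreOnLooseCherries G := by
    intro a b c d hcherry x hx y hy h
    have hcoe : (({a, b, c, d} : Finset V) : Set V) = {a, b, c, d} := by
      simp only [Finset.coe_insert, Finset.coe_singleton]
    have hle := hcond {a, b, c, d} hcherry.card_eq_four (hcoe ▸ hcherry.nonempty_induce_iso)
      x (by simpa using hx) y (by simpa using hy) h.ne h.not_adj
    exact hle.not_gt h.degree_add_degree_lt
  refine isHamiltonian_of_ore (fun x y hne hadj ↦ ?_) (by lia)
  by_contra! hlt
  exact hG.not_isLightPair hn hv ⟨hne, hadj, hlt⟩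
end

section
/- Let k ≥ 2 be an integer and let G be a connected simple graph on n vertices. Suppose that for every 4-element vertex subset S such that the subgraph of G induced on S is isomorphic to K_{1,2} ∪ K_1, to a graph obtained from K_{1,2} ∪ K_1 by adding one edge (i.e., to one of K_3 ∪ K_1, K_{1,3}, P_4), or to K_{1,3}+e, and for every pair of vertices x, y ∈ S that are nonadjacent in G, one has d(x) + d(y) ≥ n − k + 1 (degrees taken in G). Then G has a spanning tree with at most k leaves. -/
open SimpleGraph

/-!
Let `T` be a spanning tree of the connected graph `G` with the fewest leaves, and suppose that it
has at least three. Two leaves `x`, `y` are not adjacent in `G`: the path of `T` from `x` to `y` has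
a vertex of degree at least three, and exchanging an edge of the path at this vertex for `xy` would
save a leaf. If `x` is a leaf, `u` a neighbour of `x` in `G` and `w ≠ x` the parent of `u` in `T`
rooted at `x`, then exchanging `uw` for `ux` replaces the leaf `x` by `w`. By minimality `w` has
degree two in `T`, and the new tree is again minimal, so that `w` is not adjacent in `G` to any
leaf `y ≠ x` of `T`. Hence `u ↦ w` is injective on the neighbours of `x`, and its image, the
neighbours of `y` and the leaves other than `x` are pairwise disjoint. Counting them gives
`d(x) + d(y) + ℓ ≤ n + 1`, where `ℓ` is the number of leaves of `T`; this yields the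
Broersma–Tuinstra theorem, in which the degree condition is imposed on all nonadjacent pairs.

The local condition reaches every nonadjacent pair `x`, `y`. A walk from `x` to `y` leaves the
closed neighbourhood of `x` along an edge `bc`, and `x`, `b`, `c` is an induced path. If `c ≠ y`,
then adding `y` to this path gives one of the listed four-vertex graphs; if `c = y`, then so does
adding any further vertex not adjacent to `x`. The only remaining case is that `x` is adjacent to
all vertices but `y`, when `d(x) + d(y) ≥ n - 1` holds anyway.
-/

section Exchange

variable {V : Type*} {T : SimpleGraph V}

lemma not_reachable_deleteEdges_of_mem_edges (hT : T.IsAcyclic) {c d : V} {p : T.Walk c d}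
    (hp : p.IsPath) {e : Sym2 V} (he : e ∈ p.edges) : ¬ (T.deleteEdges {e}).Reachable c d := by
  intro h
  obtain ⟨q, hq⟩ := h.exists_isPath
  have hle : T.deleteEdges {e} ≤ T := deleteEdges_le {e}
  obtain rfl : q.mapLe hle = p := congrArg Subtype.val <|
    (hT.subsingleton_path c d).elim ⟨q.mapLe hle, hq.mapLe hle⟩ ⟨p, hp⟩
  rw [Walk.edges_mapLe_eq_edges] at he
  simpa using q.edges_subset_edgeSet he

lemma reachable_deleteEdges_or_reachable_deleteEdges (hT : T.Connected) (a b z : V) :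
    (T.deleteEdges {s(a, b)}).Reachable z a ∨ (T.deleteEdges {s(a, b)}).Reachable z b := by
  by_contra! h
  obtain ⟨p⟩ := hT.preconnected z a
  obtain ⟨⟨⟨u, v⟩, huv⟩, -, hu, hv⟩ :=
    p.exists_boundary_dart {u | (T.deleteEdges {s(a, b)}).Reachable z u} .rfl h.1
  have hne : s(u, v) ≠ s(a, b) := by
    intro heq
    rcases Sym2.eq_iff.1 heq with ⟨rfl, -⟩ | ⟨rfl, -⟩
    exacts [h.1 hu, h.2 hu]
  have hadj : (T.deleteEdges {s(a, b)}).Adj u v := by simpa [huv] using hne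
  exact hv (Reachable.trans hu hadj.reachable)

/-- The result of removing the edge `e` from `T` and inserting the edge `cd`. If `T` is a tree and
`e` lies on its path from `c` to `d`, this is again a tree. -/
def exchange (T : SimpleGraph V) (e : Sym2 V) (c d : V) : SimpleGraph V :=
  T.deleteEdges {e} ⊔ edge c d

lemma exchange_le {G : SimpleGraph V} (hT : T ≤ G) {c d : V} (hcd : G.Adj c d) (e : Sym2 V) :
    exchange T e c d ≤ G :=
  sup_le ((deleteEdges_le {e}).trans hT) ((edge_le_iff G).2 (.inr hcd))

lemma isTree_exchange (hT : T.IsTree) {e : Sym2 V} {c d : V}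
    (hcd : ¬ (T.deleteEdges {e}).Reachable c d) : (exchange T e c d).IsTree := by
  refine { connected := ?_, isAcyclic :=
    (hT.isAcyclic.anti (deleteEdges_le {e})).sup_edge_of_not_reachable hcd }
  obtain ⟨a, b⟩ := e
  have hle : T.deleteEdges {s(a, b)} ≤ exchange T s(a, b) c d := le_sup_left
  have hcut := reachable_deleteEdges_or_reachable_deleteEdges hT.connected a b
  have hne : c ≠ d := fun h => hcd (h ▸ .rfl)
  have hcd' : (exchange T s(a, b) c d).Reachable c d :=
    Adj.reachable (.inr ((edge_adj c d c d).2 ⟨.inl ⟨rfl, rfl⟩, hne⟩))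
  have hab : (exchange T s(a, b) c d).Reachable a b := by
    rcases hcut c, hcut d with ⟨hc | hc, hd | hd⟩
    · exact absurd (hc.trans hd.symm) hcd
    · exact (hc.mono hle).symm.trans (hcd'.trans (hd.mono hle))
    · exact (hd.mono hle).symm.trans (hcd'.symm.trans (hc.mono hle))
    · exact absurd (hc.trans hd.symm) hcd
  refine connected_iff_exists_forall_reachable _ |>.2 ⟨a, fun z => ?_⟩
  rcases hcut z with hz | hz
  · exact (hz.mono hle).symm
  · exact hab.trans (hz.mono hle).symm

variable [Finite V] [DecidableEq V]

lemma ncard_neighborSet_deleteEdges_add_ite {e : Sym2 V} (he : e ∈ T.edgeSet) (v : V) :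
    ((T.deleteEdges {e}).neighborSet v).ncard + (if v ∈ e then 1 else 0) =
      (T.neighborSet v).ncard := by
  split_ifs with hv
  · obtain ⟨w, rfl⟩ := hv
    have hset : (T.deleteEdges {s(v, w)}).neighborSet v = T.neighborSet v \ {w} := by
      ext z
      simp only [mem_neighborSet, deleteEdges_adj, Set.mem_singleton_iff, Set.mem_sdiff,
        Sym2.congr_right]
    have hw : w ∈ T.neighborSet v := he
    rw [hset, Set.ncard_sdiff_singleton_add_one hw]
  · have hset : (T.deleteEdges {e}).neighborSet v = T.neighborSet v := by
      ext z
      have hne : s(v, z) ≠ e := by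
        rintro rfl
        exact hv (Sym2.mem_mk_left v z)
      simp only [mem_neighborSet, deleteEdges_adj, Set.mem_singleton_iff, hne, not_false_eq_true,
        and_true]
    rw [hset, add_zero]

lemma ncard_neighborSet_exchange_add_ite {e : Sym2 V} (he : e ∈ T.edgeSet) {c d : V}
    (hcd : ¬ (T.deleteEdges {e}).Reachable c d) (v : V) :
    ((exchange T e c d).neighborSet v).ncard + (if v ∈ e then 1 else 0) =
      (T.neighborSet v).ncard + (if v ∈ s(c, d) then 1 else 0) := by
  have hne : c ≠ d := fun h => hcd (h ▸ .rfl)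
  have hnadj : ¬ (T.deleteEdges {e}).Adj c d := fun h => hcd h.reachable
  have hmem : s(c, d) ∈ (exchange T e c d).edgeSet :=
    .inr ((edge_adj c d c d).2 ⟨.inl ⟨rfl, rfl⟩, hne⟩)
  have hdelete : (exchange T e c d).deleteEdges {s(c, d)} = T.deleteEdges {e} := by
    rw [exchange, deleteEdges_sup, deleteEdges_edge (Set.mem_singleton _), sup_bot_eq]
    exact (deleteEdges_eq_self).2 (by simpa using hnadj)
  have h₁ := ncard_neighborSet_deleteEdges_add_ite hmem v
  have h₂ := ncard_neighborSet_deleteEdges_add_ite he v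
  rw [hdelete] at h₁
  omega

end Exchange

section Leaves

variable {V : Type*} {T : SimpleGraph V}

/-- The vertices of degree one. The degree is counted by `Set.ncard`, so a vertex of infinite degree
is not a leaf. -/
def leaves (T : SimpleGraph V) : Set V := {v | (T.neighborSet v).ncard = 1}

lemma eq_of_mem_leaves {x u v : V} (hx : x ∈ leaves T) (hu : T.Adj x u) (hv : T.Adj x v) :
    u = v := by
  obtain ⟨w, hw⟩ := Set.ncard_eq_one.1 hx
  have hu' : u ∈ T.neighborSet x := hu
  have hv' : v ∈ T.neighborSet x := hv
  rw [hw] at hu' hv'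
  exact hu'.trans hv'.symm

lemma ncard_neighborSet_toSubgraph_eq_two {x y : V} {p : T.Walk x y} (hp : p.IsPath) {w : V}
    (hw : w ∈ p.support) (hwx : w ≠ x) (hwy : w ≠ y) :
    (p.toSubgraph.neighborSet w).ncard = 2 := by
  obtain ⟨i, rfl, hi⟩ := p.mem_support_iff_exists_getVert.1 hw
  refine hp.ncard_neighborSet_toSubgraph_internal_eq_two ?_ ?_
  · rintro rfl
    exact hwx p.getVert_zero
  · refine lt_of_le_of_ne hi ?_
    rintro rfl
    exact hwy p.getVert_length

variable [Finite V]

lemma eq_or_eq_of_mem_leaves_of_mem_support {x y z : V} {p : T.Walk x y} (hp : p.IsPath)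
    (hz : z ∈ leaves T) (hzp : z ∈ p.support) : z = x ∨ z = y := by
  by_contra! h
  have htwo := ncard_neighborSet_toSubgraph_eq_two hp hzp h.1 h.2
  have hle := Set.ncard_le_ncard (p.toSubgraph.neighborSet_subset z)
  have hone : (T.neighborSet z).ncard = 1 := hz
  omega

lemma exists_mem_edges_three_le_ncard_neighborSet (hT : T.Connected) {x y z : V}
    (hx : x ∈ leaves T) (hy : y ∈ leaves T) (hz : z ∈ leaves T) (hxy : x ≠ y) (hzx : z ≠ x)
    (hzy : z ≠ y) {p : T.Walk x y} (hp : p.IsPath) :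
    ∃ w w', s(w, w') ∈ p.edges ∧ 3 ≤ (T.neighborSet w).ncard := by
  have hzp : z ∉ p.support := fun h =>
    (eq_or_eq_of_mem_leaves_of_mem_support hp hz h).elim hzx hzy
  obtain ⟨q⟩ := hT.preconnected x z
  obtain ⟨⟨⟨w, v⟩, hwv⟩, -, hw, hv⟩ :=
    q.exists_boundary_dart {u | u ∈ p.support} p.start_mem_support hzp
  have hwp : w ∈ p.support := hw
  have hsub : p.toSubgraph.neighborSet w ⊆ T.neighborSet w \ {v} := by
    intro u hu
    refine ⟨hu.adj_sub, ?_⟩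
    rintro rfl
    exact hv (p.mem_verts_toSubgraph.1 hu.snd_mem)
  have hlt : (p.toSubgraph.neighborSet w).ncard + 1 ≤ (T.neighborSet w).ncard := by
    rw [← Set.ncard_sdiff_singleton_add_one (show v ∈ T.neighborSet w from hwv)]
    gcongr
    exact Set.toFinite _
  obtain ⟨w', hw'⟩ : ∃ w', s(w, w') ∈ p.edges := by
    obtain ⟨e, he, hwe⟩ :=
      (Walk.mem_support_iff_exists_mem_edges_of_not_nil (Walk.not_nil_of_ne hxy)).1 hwp
    obtain ⟨w', rfl⟩ := hwe
    exact ⟨w', he⟩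
  have hpos : 0 < (p.toSubgraph.neighborSet w).ncard :=
    (Set.ncard_pos).2 ⟨w', p.mem_edges_toSubgraph.2 hw'⟩
  have hinternal : ∀ {l}, l ∈ leaves T → w ≠ l := by
    rintro l hl rfl
    have hone : (T.neighborSet w).ncard = 1 := hl
    omega
  have htwo := ncard_neighborSet_toSubgraph_eq_two hp hwp (hinternal hx) (hinternal hy)
  exact ⟨w, w', hw', by omega⟩

end Leaves

section Parent

variable {V : Type*} {T : SimpleGraph V}

/-- `w` is the parent of `u` in the tree `T` rooted at `x`, that is, the second vertex of the
path of `T` from `u` to `x`. -/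
structure IsParent (T : SimpleGraph V) (x u w : V) : Prop where
  adj : T.Adj u w
  not_reachable : ¬ (T.deleteEdges {s(u, w)}).Reachable u x

lemma exists_isParent (hT : T.IsTree) {x u : V} (hux : u ≠ x) : ∃ w, IsParent T x u w := by
  obtain ⟨p, hp⟩ := (hT.connected.preconnected u x).exists_isPath
  have hnil : ¬ p.Nil := Walk.not_nil_of_ne hux
  exact ⟨p.snd, p.adj_snd hnil, not_reachable_deleteEdges_of_mem_edges hT.isAcyclic hp
    (p.mk_start_snd_mem_edges hnil)⟩

namespace IsParent

lemma ne_of_isParent (hT : T.Connected) {x u w v : V} (hu : IsParent T x u w)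
    (hw : IsParent T x w v) : u ≠ v := by
  rintro rfl
  rcases reachable_deleteEdges_or_reachable_deleteEdges hT u w x with h | h
  · exact hu.not_reachable h.symm
  · exact hw.not_reachable (Sym2.eq_swap ▸ h.symm)

lemma eq_of_ncard_neighborSet_eq_two (hT : T.IsTree) {x u u' w : V} (hu : IsParent T x u w)
    (hu' : IsParent T x u' w) (hwx : w ≠ x) (hw : (T.neighborSet w).ncard = 2) : u = u' := by
  obtain ⟨v, hv⟩ := exists_isParent hT hwx
  have hne := hu.ne_of_isParent hT.connected hv
  have hne' := hu'.ne_of_isParent hT.connected hv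
  have hone : (T.neighborSet w \ {v}).ncard = 1 := by
    have hmem : v ∈ T.neighborSet w := hv.adj
    rw [Set.ncard_sdiff_singleton_of_mem hmem, hw]
  obtain ⟨t, ht⟩ := Set.ncard_eq_one.1 hone
  have hmem : u ∈ T.neighborSet w \ {v} := ⟨hu.adj.symm, hne⟩
  have hmem' : u' ∈ T.neighborSet w \ {v} := ⟨hu'.adj.symm, hne'⟩
  rw [ht] at hmem hmem'
  exact hmem.trans hmem'.symm

end IsParent

end Parent

section IsLeafMinimal

variable {V : Type*} {G T : SimpleGraph V}

/-- `T` is a spanning tree of `G` having the fewest possible leaves. -/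
structure IsLeafMinimal (G T : SimpleGraph V) : Prop where
  le : T ≤ G
  isTree : T.IsTree
  ncard_leaves_le : ∀ T' ≤ G, T'.IsTree → (leaves T).ncard ≤ (leaves T').ncard

lemma exists_isLeafMinimal (hG : G.Connected) [Finite V] : ∃ T, IsLeafMinimal G T := by
  obtain ⟨T, ⟨hle, hT⟩, hmin⟩ := (Set.toFinite {T | T ≤ G ∧ T.IsTree}).exists_minimalFor
    (fun T => (leaves T).ncard) _ hG.exists_isTree_le
  exact ⟨T, hle, hT, fun T' hle' hT' => (le_total _ _).elim id (hmin ⟨hle', hT'⟩)⟩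

namespace IsLeafMinimal

variable [Finite V] {x y u u' w : V}

lemma not_adj_of_mem_leaves (hT : IsLeafMinimal G T) (hthree : 3 ≤ (leaves T).ncard)
    (hx : x ∈ leaves T) (hy : y ∈ leaves T) : ¬ G.Adj x y := by
  classical
  intro hadj
  have hpair : ({x, y} : Set V).ncard = 2 := Set.ncard_pair hadj.ne
  obtain ⟨z, hz, hzxy⟩ : ∃ z ∈ leaves T, z ∉ ({x, y} : Set V) :=
    Set.exists_mem_notMem_of_ncard_lt_ncard (by omega)
  obtain ⟨hzx, hzy⟩ : z ≠ x ∧ z ≠ y := by simpa using hzxy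
  obtain ⟨p, hp⟩ := (hT.isTree.connected.preconnected x y).exists_isPath
  obtain ⟨w, w', hww', hw⟩ := exists_mem_edges_three_le_ncard_neighborSet hT.isTree.connected
    hx hy hz hadj.ne hzx hzy hp
  have hcut := not_reachable_deleteEdges_of_mem_edges hT.isTree.isAcyclic hp hww'
  have hsub : leaves (exchange T s(w, w') x y) ⊆ insert w' (leaves T \ {x, y}) := by
    -- Now `x` and `y` have degree two, and `w` lost one of at least three edges, so the only
    -- possible new leaf is the other end of the removed edge.
    intro v hv
    have hdeg := ncard_neighborSet_exchange_add_ite (p.edges_subset_edgeSet hww') hcut v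
    simp only [leaves, Set.mem_ofPred_eq] at hx hy hv
    simp only [leaves, Set.mem_insert_iff, Set.mem_sdiff, Set.mem_ofPred_eq,
      Set.mem_singleton_iff]
    simp only [Sym2.mem_iff] at hdeg
    grind
  have hle := hT.ncard_leaves_le _ (exchange_le hT.le hadj _) (isTree_exchange hT.isTree hcut)
  have hcard : (leaves T \ {x, y}).ncard + 2 = (leaves T).ncard :=
    hpair ▸ Set.ncard_sdiff_add_ncard_of_subset (Set.pair_subset hx hy)
  have hinsert := Set.ncard_insert_le w' (leaves T \ {x, y})
  have hle' := Set.ncard_le_ncard hsub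
  omega

lemma leaves_exchange_eq (hT : IsLeafMinimal G T) (hx : x ∈ leaves T) (hxu : G.Adj x u)
    (hw : IsParent T x u w) :
    leaves (exchange T s(u, w) u x) = insert w (leaves T \ {x}) := by
  classical
  have hsub : leaves (exchange T s(u, w) u x) ⊆ insert w (leaves T \ {x}) := by
    -- If `w ≠ x` then only `w` loses an edge: the degree of `u` is unchanged and `x` gains one.
    intro v hv
    have hdeg := ncard_neighborSet_exchange_add_ite hw.adj hw.not_reachable v
    have hux := hxu.ne
    simp only [leaves, Set.mem_ofPred_eq] at hx hv
    simp only [leaves, Set.mem_insert_iff, Set.mem_sdiff, Set.mem_ofPred_eq,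
      Set.mem_singleton_iff]
    simp only [Sym2.mem_iff] at hdeg
    grind
  refine Set.eq_of_subset_of_ncard_le hsub ?_
  calc (insert w (leaves T \ {x})).ncard ≤ (leaves T \ {x}).ncard + 1 := Set.ncard_insert_le _ _
    _ = (leaves T).ncard := Set.ncard_sdiff_singleton_add_one hx
    _ ≤ _ := hT.ncard_leaves_le _ (exchange_le hT.le hxu.symm _)
      (isTree_exchange hT.isTree hw.not_reachable)

lemma ncard_neighborSet_eq_two_of_isParent (hT : IsLeafMinimal G T) (hx : x ∈ leaves T)
    (hxu : G.Adj x u) (hw : IsParent T x u w) (hwx : w ≠ x) : (T.neighborSet w).ncard = 2 := by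
  classical
  have hleaf : w ∈ leaves (exchange T s(u, w) u x) := by
    rw [hT.leaves_exchange_eq hx hxu hw]
    exact Set.mem_insert _ _
  have hdeg := ncard_neighborSet_exchange_add_ite hw.adj hw.not_reachable w
  have hone : ((exchange T s(u, w) u x).neighborSet w).ncard = 1 := hleaf
  simp only [hone, Sym2.mem_iff, or_true, if_true, hw.adj.ne', hwx, or_self, if_false] at hdeg
  omega

lemma eq_of_isParent (hT : IsLeafMinimal G T) (hx : x ∈ leaves T) (hxu : G.Adj x u)
    (hw : IsParent T x u w) (hw' : IsParent T x u' w) : u = u' := by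
  by_cases hwx : w = x
  · subst hwx
    exact eq_of_mem_leaves hx hw.adj.symm hw'.adj.symm
  · exact hw.eq_of_ncard_neighborSet_eq_two hT.isTree hw' hwx
      (hT.ncard_neighborSet_eq_two_of_isParent hx hxu hw hwx)

lemma notMem_leaves_sdiff_of_isParent (hT : IsLeafMinimal G T) (hx : x ∈ leaves T)
    (hxu : G.Adj x u) (hw : IsParent T x u w) : w ∉ leaves T \ {x} := by
  rintro ⟨hone : (T.neighborSet w).ncard = 1, hwx⟩
  have htwo := hT.ncard_neighborSet_eq_two_of_isParent hx hxu hw hwx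
  omega

lemma not_adj_of_isParent (hT : IsLeafMinimal G T) (hthree : 3 ≤ (leaves T).ncard)
    (hx : x ∈ leaves T) (hxu : G.Adj x u) (hw : IsParent T x u w) (hy : y ∈ leaves T)
    (hyx : y ≠ x) : ¬ G.Adj w y := by
  have heq := hT.leaves_exchange_eq hx hxu hw
  have hwT := hT.notMem_leaves_sdiff_of_isParent hx hxu hw
  have hcard : (leaves (exchange T s(u, w) u x)).ncard = (leaves T).ncard := by
    rw [heq, Set.ncard_insert_of_notMem hwT, Set.ncard_sdiff_singleton_add_one hx]
  have hmin : IsLeafMinimal G (exchange T s(u, w) u x) :=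
    { le := exchange_le hT.le hxu.symm _
      isTree := isTree_exchange hT.isTree hw.not_reachable
      ncard_leaves_le := hcard ▸ hT.ncard_leaves_le }
  refine hmin.not_adj_of_mem_leaves (hcard ▸ hthree) ?_ ?_ <;> rw [heq]
  · exact .inl rfl
  · exact .inr ⟨hy, hyx⟩

lemma ncard_neighborSet_add_le (hT : IsLeafMinimal G T) (hthree : 3 ≤ (leaves T).ncard)
    (hx : x ∈ leaves T) (hy : y ∈ leaves T) (hyx : y ≠ x) :
    (G.neighborSet x).ncard + (G.neighborSet y).ncard + (leaves T).ncard ≤ Nat.card V + 1 := by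
  have hparent : ∀ u : G.neighborSet x, ∃ w, IsParent T x u w := fun u =>
    exists_isParent hT.isTree u.2.ne'
  choose f hf using hparent
  have hinj : Function.Injective f := fun u u' h =>
    Subtype.ext (hT.eq_of_isParent hx u.2 (hf u) (h ▸ hf u'))
  have hrange : (Set.range f).ncard = (G.neighborSet x).ncard := Set.ncard_range_of_injective hinj
  have hneighbor : Disjoint (Set.range f) (G.neighborSet y) := by
    rw [Set.disjoint_left]
    rintro _ ⟨u, rfl⟩ hu
    exact hT.not_adj_of_isParent hthree hx u.2 (hf u) hy hyx hu.symm
  have hleaves : Disjoint (Set.range f ∪ G.neighborSet y) (leaves T \ {x}) := by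
    rw [Set.disjoint_left]
    rintro _ (⟨u, rfl⟩ | hv) hv'
    · exact hT.notMem_leaves_sdiff_of_isParent hx u.2 (hf u) hv'
    · exact hT.not_adj_of_mem_leaves hthree hy hv'.1 hv
  calc (G.neighborSet x).ncard + (G.neighborSet y).ncard + (leaves T).ncard
      = (Set.range f ∪ G.neighborSet y ∪ leaves T \ {x}).ncard + 1 := by
        rw [Set.ncard_union_eq hleaves, Set.ncard_union_eq hneighbor, hrange, add_assoc _ _ 1,
          Set.ncard_sdiff_singleton_add_one hx]
    _ ≤ Nat.card V + 1 := by
        gcongr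
        exact Set.ncard_le_card _

end IsLeafMinimal

theorem exists_isTree_ncard_leaves_le [Finite V] (hG : G.Connected) {k : ℕ} (hk : 2 ≤ k)
    (hdeg : ∀ x y, x ≠ y → ¬ G.Adj x y →
      Nat.card V + 1 ≤ (G.neighborSet x).ncard + (G.neighborSet y).ncard + k) :
    ∃ T ≤ G, T.IsTree ∧ (leaves T).ncard ≤ k := by
  obtain ⟨T, hT⟩ := exists_isLeafMinimal hG
  refine ⟨T, hT.le, hT.isTree, ?_⟩
  by_contra! hlt
  have hthree : 3 ≤ (leaves T).ncard := by omega
  obtain ⟨x, hx, y, hy, hxy⟩ := Set.one_lt_ncard (s := leaves T) |>.1 (by omega)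
  have hle := hT.ncard_neighborSet_add_le hthree hx hy hxy.symm
  have hge := hdeg x y hxy (hT.not_adj_of_mem_leaves hthree hx hy)
  omega

end IsLeafMinimal

section InducesP3Extension

variable {V : Type*} {G : SimpleGraph V}

/-- `S` induces a path on three vertices together with a further vertex not adjacent to both of its
ends. The four possible graphs are listed by the number of neighbours of this further vertex. -/
def InducesP3Extension (G : SimpleGraph V) (S : Finset V) : Prop :=
  Nonempty (G.induce (S : Set V) ≃g pathUnionK1) ∨ Nonempty (G.induce (S : Set V) ≃g star13) ∨
    Nonempty (G.induce (S : Set V) ≃g path4) ∨ Nonempty (G.induce (S : Set V) ≃g star13PlusE)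

variable {a m c v x y : V}

lemma nonempty_induce_iso_of_adj_iff_s3 {ι : Type*} [Fintype ι] [LinearOrder ι] [DecidableEq V]
    {H : SimpleGraph ι} (f : ι → V) {S : Finset V} (hS : Finset.univ.image f = S)
    (hcard : S.card = Fintype.card ι)
    (hadj : ∀ i j, i < j → (G.Adj (f i) (f j) ↔ H.Adj i j)) :
    Nonempty (G.induce (S : Set V) ≃g H) := by
  have hinj : Function.Injective f := by
    rw [← Set.injOn_univ, ← Finset.coe_univ, ← Finset.card_image_iff, hS, hcard,
      Finset.card_univ]
  have hadj' : ∀ i j, G.Adj (f i) (f j) ↔ H.Adj i j := by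
    intro i j
    rcases lt_trichotomy i j with hij | rfl | hji
    · exact hadj i j hij
    · simp
    · rw [G.adj_comm, H.adj_comm, hadj j i hji]
  have hrange : (S : Set V) = Set.range f := by
    rw [← hS, Finset.coe_image, Finset.coe_univ, Set.image_univ]
  let φ : H ↪g G := ⟨⟨f, hinj⟩, hadj' _ _⟩
  exact hrange ▸ ⟨φ.isoInduceRange.symm⟩

lemma inducesP3Extension_of_not_adj [DecidableEq V] (hcard : ({a, m, c, v} : Finset V).card = 4)
    (ham : G.Adj a m) (hmc : G.Adj m c) (hac : ¬ G.Adj a c) (hcv : ¬ G.Adj c v) :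
    InducesP3Extension G {a, m, c, v} := by
  by_cases hav : G.Adj a v <;> by_cases hmv : G.Adj m v
  · have hperm : ({m, a, v, c} : Finset V) = {a, m, c, v} := by grind
    refine .inr (.inr (.inr (nonempty_induce_iso_of_adj_iff_s3 ![m, a, v, c] ?_ hcard ?_)))
    · simpa [Fin.univ_succ] using hperm
    · simp [Fin.forall_fin_succ, star13PlusE, G.adj_comm m a, G.adj_comm v, *]
  · have hperm : ({v, a, m, c} : Finset V) = {a, m, c, v} := by grind
    refine .inr (.inr (.inl (nonempty_induce_iso_of_adj_iff_s3 ![v, a, m, c] ?_ hcard ?_)))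
    · simpa [Fin.univ_succ] using hperm
    · simp [Fin.forall_fin_succ, path4, G.adj_comm v, *]
  · have hperm : ({m, a, v, c} : Finset V) = {a, m, c, v} := by grind
    refine .inr (.inl (nonempty_induce_iso_of_adj_iff_s3 ![m, a, v, c] ?_ hcard ?_))
    · simpa [Fin.univ_succ] using hperm
    · simp [Fin.forall_fin_succ, star13, G.adj_comm m a, G.adj_comm v, *]
  · refine .inl (nonempty_induce_iso_of_adj_iff_s3 ![a, m, c, v] ?_ hcard ?_)
    · simp [Fin.univ_succ]
    · simp [Fin.forall_fin_succ, pathUnionK1, *]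

lemma exists_inducesP3Extension_of_not_adj (ham : G.Adj a m) (hmc : G.Adj m c) (hac : a ≠ c)
    (hnac : ¬ G.Adj a c) (hva : v ≠ a) (hvm : v ≠ m) (hvc : v ≠ c) (hncv : ¬ G.Adj c v) :
    ∃ S : Finset V, S.card = 4 ∧ a ∈ S ∧ c ∈ S ∧ v ∈ S ∧ InducesP3Extension G S := by
  classical
  have hcard : ({a, m, c, v} : Finset V).card = 4 :=
    Finset.card_eq_four.2 ⟨a, m, c, v, ham.ne, hac, hva.symm, hmc.ne, hvm.symm, hvc.symm, rfl⟩
  exact ⟨_, hcard, by simp, by simp, by simp,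
    inducesP3Extension_of_not_adj hcard ham hmc hnac hncv⟩

lemma exists_inducesP3Extension_or_forall_adj (hG : G.Preconnected) (hxy : x ≠ y)
    (hnxy : ¬ G.Adj x y) :
    (∃ S : Finset V, S.card = 4 ∧ x ∈ S ∧ y ∈ S ∧ InducesP3Extension G S) ∨
      ∀ v, v ≠ x → v ≠ y → G.Adj x v := by
  obtain ⟨p⟩ := hG x y
  obtain ⟨⟨⟨b, c⟩, hbc⟩, -, hb, hc⟩ :=
    p.exists_boundary_dart {u | u = x ∨ G.Adj x u} (.inl rfl) (by simp [hxy.symm, hnxy])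
  obtain ⟨hcx, hxc⟩ : c ≠ x ∧ ¬ G.Adj x c := by simpa using hc
  have hxb : G.Adj x b := by
    rcases hb with rfl | hb
    · exact absurd hbc hxc
    · exact hb
  by_cases hcy : c = y
  · subst hcy
    rw [or_iff_not_imp_left]
    intro hS v hvx hvc
    by_contra hxv
    have hvb : v ≠ b := by
      rintro rfl
      exact hxv hxb
    obtain ⟨S, hcard, hyS, hxS, -, hind⟩ := exists_inducesP3Extension_of_not_adj hbc.symm
      hxb.symm hcx (mt .symm hxc) hvc hvb hvx hxv
    exact hS ⟨S, hcard, hxS, hyS, hind⟩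
  · have hyb : y ≠ b := by
      rintro rfl
      exact hnxy hxb
    obtain ⟨S, hcard, -, hxS, hyS, hind⟩ := exists_inducesP3Extension_of_not_adj hbc.symm
      hxb.symm hcx (mt .symm hxc) (Ne.symm hcy) hyb hxy.symm hnxy
    exact .inl ⟨S, hcard, hxS, hyS, hind⟩

lemma card_le_ncard_neighborSet_add [Finite V] (hG : G.Preconnected) (hxy : x ≠ y)
    (hadj : ∀ v, v ≠ x → v ≠ y → G.Adj x v) :
    Nat.card V ≤ (G.neighborSet x).ncard + (G.neighborSet y).ncard + 1 := by
  have : Nontrivial V := ⟨x, y, hxy⟩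
  obtain ⟨z, hyz⟩ := hG.exists_adj_of_nontrivial y
  have hpos : 0 < (G.neighborSet y).ncard := (Set.ncard_pos).2 ⟨z, hyz⟩
  have hsub : ({x, y} : Set V)ᶜ ⊆ G.neighborSet x := by
    intro v hv
    obtain ⟨hvx, hvy⟩ : v ≠ x ∧ v ≠ y := by simpa using hv
    exact hadj v hvx hvy
  have hle := Set.ncard_le_ncard hsub
  have hcompl := Set.ncard_add_ncard_compl ({x, y} : Set V)
  rw [Set.ncard_pair hxy] at hcompl
  omega

end InducesP3Extension

/-- **Corollary 2.** For a given integer `k ≥ 2`, every connected graph on `n` vertices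
satisfying `d(x) + d(y) ≥ n - k + 1` for each pair of nonadjacent vertices `x, y` of every
4-element induced subgraph isomorphic to `K_{1,2} ∪ K_1`, to a graph obtained from
`K_{1,2} ∪ K_1` by adding one edge (i.e. to one of `K_3 ∪ K_1`, `K_{1,3}`, `P_4`), or to
`K_{1,3} + e`, has a spanning tree with at most `k` leaves. -/
theorem stmt3 {V : Type*} [Fintype V] [DecidableEq V]
    (G : SimpleGraph V) [DecidableRel G.Adj]
    (k : ℕ) (hk : 2 ≤ k) (hconn : G.Connected)
    (hcond : ∀ S : Finset V, S.card = 4 →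
      (Nonempty (G.induce (S : Set V) ≃g pathUnionK1) ∨
       (Nonempty (G.induce (S : Set V) ≃g triangleUnionK1) ∨
        Nonempty (G.induce (S : Set V) ≃g star13) ∨
        Nonempty (G.induce (S : Set V) ≃g path4)) ∨
       Nonempty (G.induce (S : Set V) ≃g star13PlusE)) →
      ∀ x ∈ S, ∀ y ∈ S, x ≠ y → ¬ G.Adj x y →
        (Fintype.card V : ℤ) - k + 1 ≤ G.degree x + G.degree y) :
    ∃ T : SimpleGraph V, T ≤ G ∧ T.IsTree ∧
      {v : V | (T.neighborSet v).ncard = 1}.ncard ≤ k := by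
  have hdegree (v : V) : (G.neighborSet v).ncard = G.degree v := Set.ncard_eq_toFinset_card' _
  refine exists_isTree_ncard_leaves_le hconn hk fun x y hxy hnxy => ?_
  rcases exists_inducesP3Extension_or_forall_adj hconn.preconnected hxy hnxy with
    ⟨S, hcard, hxS, hyS, hind⟩ | hadj
  · unfold InducesP3Extension at hind
    have hsum := hcond S hcard (by tauto) x hxS y hyS hxy hnxy
    rw [hdegree, hdegree, Nat.card_eq_fintype_card]
    omega
  · have hsum := card_le_ncard_neighborSet_add hconn.preconnected hxy hadj
    omega
end
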